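/- arXiv:2503.06017 — 5 statements merged into one kernel-verified Lean document; each statement's English description precedes it below -/
import Mathlib

section
/- Let (N, v) be an additively separable hedonic game with TV(N,v) ≥ 0, let c ≥ 1 be a real number, let π* be a partition of N maximizing the correlation welfare CW over all partitions, and let π be a partition with c·CW(π) ≥ CW(π*). Then c·SW(π) ≥ SW(π*). -/
/-- A partition of a finite set of agents, represented by the function
assigning to each agent the coalition (finset) containing it. -/
structure AgentPartition (α : Type*) [DecidableEq α] [Fintype α] where
  part : α → Finset α
  mem_part : ∀ i, i ∈ part i
  part_eq_of_mem : ∀ i j, j ∈ part i → part j = part i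

variable {α : Type*} [DecidableEq α] [Fintype α]

/-- Social welfare of a partition in the ASHG with valuations `v`. -/
noncomputable def SW (v : α → α → ℝ) (π : AgentPartition α) : ℝ :=
  ∑ i, ∑ j ∈ π.part i, v i j

/-- Correlation welfare of a partition in the ASHG with valuations `v`. -/
noncomputable def CW (v : α → α → ℝ) (π : AgentPartition α) : ℝ :=
  (1 / 2) * ∑ i, ((∑ j ∈ π.part i, v i j) - ∑ j ∈ (π.part i)ᶜ, v i j)

/-- Total value of the ASHG with valuations `v`. -/
noncomputable def TV (α : Type*) [Fintype α] (v : α → α → ℝ) : ℝ :=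
  ∑ i, ∑ j, v i j

theorem SW_add_sum_sum_compl_eq_TV (v : α → α → ℝ) (π : AgentPartition α) :
    SW v π + ∑ i, ∑ j ∈ (π.part i)ᶜ, v i j = TV α v := by
  simp only [SW, TV, ← Finset.sum_add_distrib, Finset.sum_add_sum_compl]

theorem CW_eq_SW_sub_TV_div_two (v : α → α → ℝ) (π : AgentPartition α) :
    CW v π = SW v π - TV α v / 2 := by
  have hCW : CW v π = 1 / 2 * (SW v π - ∑ i, ∑ j ∈ (π.part i)ᶜ, v i j) := by
    rw [CW, SW, Finset.sum_sub_distrib]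
  linarith [SW_add_sum_sum_compl_eq_TV v π]

theorem sw_approx_of_cw_approx_general (v : α → α → ℝ) (hTV : 0 ≤ TV α v) (c : ℝ)
    (hc : 1 ≤ c) (π' π : AgentPartition α) (happrox : CW v π' ≤ c * CW v π) :
    SW v π' ≤ c * SW v π := by
  have hnonneg : 0 ≤ (c - 1) * (TV α v / 2) :=
    mul_nonneg (sub_nonneg.2 hc) (div_nonneg hTV zero_le_two)
  calc
    SW v π' = CW v π' + TV α v / 2 := by rw [CW_eq_SW_sub_TV_div_two, sub_add_cancel]
    _ ≤ c * CW v π + TV α v / 2 := by gcongr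
    _ = c * SW v π - (c - 1) * (TV α v / 2) := by rw [CW_eq_SW_sub_TV_div_two]; ring
    _ ≤ c * SW v π := sub_le_self _ hnonneg

theorem sw_approx_of_cw_approx (v : α → α → ℝ) (hv : ∀ i, v i i = 0)
    (hTV : 0 ≤ TV α v) (c : ℝ) (hc : 1 ≤ c) (πstar π : AgentPartition α)
    (hmax : ∀ π' : AgentPartition α, CW v π' ≤ CW v πstar)
    (happrox : CW v πstar ≤ c * CW v π) :
    SW v πstar ≤ c * SW v π :=
  sw_approx_of_cw_approx_general v hTV c hc πstar π happrox
end

section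
/- Let (N, v) be an additively separable hedonic game with |N| ≥ 2 and let π be any partition of N. Then there exists a partition π₂ of N consisting of at most two coalitions such that 2·SW(π₂) ≥ SW(π) + TV(N,v). (Equivalently, merging the coalitions of π into two groups uniformly at random yields expected social welfare SW(π) + (1/2)·A(π), where A(π) = Σ_{i∈N} Σ_{j∉π(i)} v_i(j) is the total cross-coalition value of π.) -/
variable {α : Type*} [DecidableEq α] [Fintype α]

/-- The coalitions (parts) of a partition. -/
def AgentPartition.parts (π : AgentPartition α) : Finset (Finset α) :=
  Finset.univ.image π.part

/-!
Label the coalitions of `π` independently and uniformly from `k` labels, and merge coalitions with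
equal labels. Pairs inside a coalition of `π` stay together, while a pair across two coalitions is
brought together with probability `1 / k`. Hence the expected welfare is `SW(π) + A(π) / k`, and
some labelling does at least as well as the average; `A(π) = TV - SW(π)` gives the bound.
-/

open Finset BigOperators

theorem expect_ite_apply_eq_apply {ι κ M : Type*} [Fintype ι] [DecidableEq ι] [Fintype κ]
    [DecidableEq κ] [Nonempty κ] [AddCommMonoid M] [Module ℚ≥0 M] {a b : ι} (hab : a ≠ b) (x : M) :
    𝔼 c : ι → κ, (if c a = c b then x else 0) = (Fintype.card κ : ℚ≥0)⁻¹ • x := by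
  have hba : b ≠ a := hab.symm
  -- Fixing all labels but that of `a`, exactly one choice for the label of `a` agrees with `c b`.
  calc 𝔼 c : ι → κ, (if c a = c b then x else 0)
    _ = 𝔼 p : κ × ({j // j ≠ a} → κ), (if p.1 = p.2 ⟨b, hba⟩ then x else 0) :=
        Fintype.expect_equiv (Equiv.funSplitAt a κ) _ _ fun _ => rfl
    _ = 𝔼 d : {j // j ≠ a} → κ, 𝔼 y : κ, (if y = d ⟨b, hba⟩ then x else 0) := by
        rw [← univ_product_univ, expect_product, expect_comm]
    _ = (Fintype.card κ : ℚ≥0)⁻¹ • x := by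
        simp only [Fintype.expect_ite_eq', Fintype.expect_const]

namespace AgentPartition

theorem mem_part_iff (π : AgentPartition α) {i j : α} : j ∈ π.part i ↔ π.part j = π.part i :=
  ⟨π.part_eq_of_mem i j, fun h => h ▸ π.mem_part j⟩

/-- The partition of the agents into the nonempty fibres of the map `c`, used to describe a
partition by labels of agents. -/
def fibers {κ : Type*} [DecidableEq κ] (c : α → κ) : AgentPartition α where
  part i := {j | c j = c i}
  mem_part i := by simp
  part_eq_of_mem i j hj := by simp [(mem_filter.1 hj).2]

theorem card_parts_fibers_le {κ : Type*} [DecidableEq κ] [Fintype κ] (c : α → κ) :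
    (fibers c).parts.card ≤ Fintype.card κ := by
  have hsub : (fibers c).parts ⊆ univ.image fun y : κ => ({j | c j = y} : Finset α) :=
    image_subset_iff.2 fun i _ => mem_image_of_mem _ (mem_univ (c i))
  exact (card_le_card hsub).trans card_image_le

/-- The coarsening of `π` in which two coalitions are merged when they receive the same label.
Labels are given to all finsets of agents, but only those of the coalitions of `π` matter. -/
def merge {κ : Type*} [DecidableEq κ] (π : AgentPartition α) (c : Finset α → κ) :
    AgentPartition α :=
  fibers fun i => c (π.part i)

theorem card_parts_merge_le {κ : Type*} [DecidableEq κ] [Fintype κ] (π : AgentPartition α)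
    (c : Finset α → κ) : (π.merge c).parts.card ≤ Fintype.card κ :=
  card_parts_fibers_le _

/-- The total cross-coalition value `A(π)`: the value of all ordered pairs of agents that `π`
separates, which is what merging coalitions can gain. -/
noncomputable def crossValue (v : α → α → ℝ) (π : AgentPartition α) : ℝ :=
  ∑ i, ∑ j ∈ (π.part i)ᶜ, v i j

theorem SW_add_crossValue (v : α → α → ℝ) (π : AgentPartition α) :
    SW v π + crossValue v π = TV α v := by
  simp only [SW, crossValue, TV, ← sum_add_distrib, sum_add_sum_compl]

theorem SW_merge {κ : Type*} [DecidableEq κ] (v : α → α → ℝ) (π : AgentPartition α)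
    (c : Finset α → κ) :
    SW v (π.merge c) = ∑ i, ∑ j, if c (π.part j) = c (π.part i) then v i j else 0 := by
  simp only [SW, merge, fibers, sum_filter]

variable {κ : Type*} [DecidableEq κ] [Fintype κ] [Nonempty κ]

theorem expect_ite_label_part_eq (π : AgentPartition α) (i j : α) (x : ℝ) :
    𝔼 c : Finset α → κ, (if c (π.part j) = c (π.part i) then x else 0) =
      if j ∈ π.part i then x else x / Fintype.card κ := by
  split_ifs with hj
  · simp only [π.mem_part_iff.1 hj, if_true, Fintype.expect_const]
  · rw [expect_ite_apply_eq_apply (mt π.mem_part_iff.2 hj), NNRat.smul_def]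
    push_cast
    ring

theorem expect_SW_merge (v : α → α → ℝ) (π : AgentPartition α) :
    𝔼 c : Finset α → κ, SW v (π.merge c) = SW v π + crossValue v π / Fintype.card κ := by
  calc 𝔼 c : Finset α → κ, SW v (π.merge c)
    _ = ∑ i, ∑ j, if j ∈ π.part i then v i j else v i j / Fintype.card κ := by
        simp only [SW_merge, expect_sum_comm, expect_ite_label_part_eq]
    _ = SW v π + crossValue v π / Fintype.card κ := by
        simp only [SW, crossValue, sum_div, ← sum_add_distrib, sum_ite, filter_mem_eq_inter,
          univ_inter, filter_notMem_eq_sdiff, compl_eq_univ_sdiff]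

variable (κ) in
theorem exists_le_SW_merge (v : α → α → ℝ) (π : AgentPartition α) :
    ∃ c : Finset α → κ, SW v π + crossValue v π / Fintype.card κ ≤ SW v (π.merge c) := by
  obtain ⟨c, -, hc⟩ := exists_le_of_le_expect univ_nonempty (expect_SW_merge (κ := κ) v π).ge
  exact ⟨c, hc⟩

end AgentPartition

theorem exists_two_part_partition_doubling_general (k : ℕ) [NeZero k] (v : α → α → ℝ)
    (π : AgentPartition α) :
    ∃ π' : AgentPartition α, π'.parts.card ≤ k ∧
      ((k : ℝ) - 1) * SW v π + TV α v ≤ k * SW v π' := by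
  obtain ⟨c, hc⟩ := π.exists_le_SW_merge (Fin k) v
  have hk : (k : ℝ) ≠ 0 := NeZero.ne _
  refine ⟨π.merge c, (π.card_parts_merge_le c).trans_eq (Fintype.card_fin k), ?_⟩
  calc ((k : ℝ) - 1) * SW v π + TV α v
    _ = k * (SW v π + π.crossValue v / k) := by
        rw [← π.SW_add_crossValue]
        field_simp
        ring
    _ ≤ k * SW v (π.merge c) := by
        rw [Fintype.card_fin] at hc
        gcongr

theorem exists_two_part_partition_doubling (v : α → α → ℝ)
    (hv : ∀ i, v i i = 0) (hn : 2 ≤ Fintype.card α) (π : AgentPartition α) :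
    ∃ π₂ : AgentPartition α, π₂.parts.card ≤ 2 ∧
      SW v π + TV α v ≤ 2 * SW v π₂ := by
  obtain ⟨π₂, hcard, hSW⟩ := exists_two_part_partition_doubling_general 2 v π
  push_cast at hSW
  exact ⟨π₂, hcard, by linarith⟩
end

section
/- Let (N, v) be a symmetric aversion-to-enemies game on n = |N| agents, i.e., v(i,j) ∈ {−n, 1} for all distinct i, j ∈ N. Then for every partition π of N there exists a partition π' of N with SW(π') ≥ SW(π) such that no coalition of π' contains two distinct agents i, j with v(i,j) = −n. -/
variable {α : Type*} [DecidableEq α] [Fintype α]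

/-!
A partition maximizing social welfare has no enemies inside a coalition. When an agent `a` leaves
its coalition to be alone, the social welfare drops by the sum of `v a j + v j a` over the other
members `j`, so at a maximum this sum is nonnegative for every agent. An enemy would contribute
`-2n` to it, and the at most `n - 2` remaining members at most `2` each.
-/

namespace AgentPartition

/-- The partition obtained from `π` when agent `a` leaves its coalition to form a singleton. -/
def isolate (π : AgentPartition α) (a : α) : AgentPartition α where
  part i := if i = a then {a} else (π.part i).erase a
  mem_part i := by
    by_cases hi : i = a
    · simp [hi]
    · simp [hi, π.mem_part i]
  part_eq_of_mem i j hj := by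
    by_cases hi : i = a
    · simp_all
    · obtain ⟨hja, hj⟩ : j ≠ a ∧ j ∈ π.part i := by simpa [hi] using hj
      simp [hi, hja, π.part_eq_of_mem i j hj]

@[simp]
theorem part_isolate_self (π : AgentPartition α) (a : α) : (π.isolate a).part a = {a} :=
  if_pos rfl

theorem part_isolate_of_ne (π : AgentPartition α) {a i : α} (h : i ≠ a) :
    (π.isolate a).part i = (π.part i).erase a :=
  if_neg h

theorem mem_part_comm (π : AgentPartition α) {i j : α} : j ∈ π.part i ↔ i ∈ π.part j :=
  ⟨fun h => π.part_eq_of_mem i j h ▸ π.mem_part i, fun h => π.part_eq_of_mem j i h ▸ π.mem_part j⟩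

theorem part_injective : Function.Injective (part : AgentPartition α → α → Finset α) := by
  rintro ⟨p, _, _⟩ ⟨q, _, _⟩ h
  simpa using h

instance : Finite (AgentPartition α) :=
  Finite.of_injective part part_injective

instance : Nonempty (AgentPartition α) :=
  ⟨{ part := fun i => {i}
     mem_part := Finset.mem_singleton_self
     part_eq_of_mem := fun _ _ h => by rw [Finset.mem_singleton.mp h] }⟩

end AgentPartition

theorem SW_eq_SW_isolate_add (v : α → α → ℝ) (π : AgentPartition α) (a : α) :
    SW v π = SW v (π.isolate a) + ∑ j ∈ (π.part a).erase a, (v a j + v j a) := by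
  have others : ∀ i ∈ Finset.univ.erase a, ∑ j ∈ π.part i, v i j =
      ∑ j ∈ (π.isolate a).part i, v i j + if i ∈ π.part a then v i a else 0 := by
    intro i hi
    rw [π.part_isolate_of_ne (Finset.ne_of_mem_erase hi)]
    split_ifs with hia
    · exact (Finset.sum_erase_add _ _ (π.mem_part_comm.mp hia)).symm
    · rw [Finset.erase_eq_of_notMem (mt π.mem_part_comm.mp hia), add_zero]
  have values_of_a : ∑ i ∈ Finset.univ.erase a, (if i ∈ π.part a then v i a else 0) =
      ∑ j ∈ (π.part a).erase a, v j a := by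
    rw [Finset.sum_ite_mem, Finset.erase_inter, Finset.univ_inter]
  have isolated : ∑ j ∈ (π.isolate a).part a, v a j = v a a := by simp
  calc SW v π
      = ∑ j ∈ π.part a, v a j + ∑ i ∈ Finset.univ.erase a, ∑ j ∈ π.part i, v i j :=
        (Finset.add_sum_erase _ _ (Finset.mem_univ a)).symm
    _ = (v a a + ∑ j ∈ (π.part a).erase a, v a j) +
          (∑ i ∈ Finset.univ.erase a, ∑ j ∈ (π.isolate a).part i, v i j +
            ∑ j ∈ (π.part a).erase a, v j a) := by
        rw [Finset.sum_congr rfl others, Finset.sum_add_distrib, values_of_a,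
          Finset.add_sum_erase _ _ (π.mem_part a)]
    _ = SW v (π.isolate a) + ∑ j ∈ (π.part a).erase a, (v a j + v j a) := by
        rw [SW, ← Finset.add_sum_erase _ _ (Finset.mem_univ a), isolated, Finset.sum_add_distrib]
        ring

theorem sum_erase_part_nonneg_of_forall_SW_le {v : α → α → ℝ} {π : AgentPartition α}
    (hmax : ∀ σ, SW v σ ≤ SW v π) (a : α) :
    0 ≤ ∑ j ∈ (π.part a).erase a, (v a j + v j a) := by
  linarith [SW_eq_SW_isolate_add v π a, hmax (π.isolate a)]

theorem sum_le_add_card_sub_one_mul {ι R : Type*} [Ring R] [PartialOrder R] [IsOrderedAddMonoid R]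
    {s : Finset ι} {f : ι → R} {c : R} {b : ι} (hb : b ∈ s) (hf : ∀ j ∈ s, f j ≤ c) :
    ∑ j ∈ s, f j ≤ f b + (s.card - 1) * c := by
  classical
  calc ∑ j ∈ s, f j
      = f b + ∑ j ∈ s.erase b, f j := (Finset.add_sum_erase _ _ hb).symm
    _ ≤ f b + (s.erase b).card • c := by
        gcongr
        exact Finset.sum_le_card_nsmul _ _ _ fun j hj => hf j (Finset.mem_of_mem_erase hj)
    _ = f b + (s.card - 1) * c := by
        rw [nsmul_eq_mul, Finset.cast_card_erase_of_mem hb]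

theorem two_sub_card_part_mul_le_of_forall_SW_le {v : α → α → ℝ} {c : ℝ}
    (hc : ∀ i j, i ≠ j → v i j + v j i ≤ c) {π : AgentPartition α}
    (hmax : ∀ σ, SW v σ ≤ SW v π) {i j : α} (hij : i ≠ j) (hj : j ∈ π.part i) :
    (2 - (π.part i).card) * c ≤ v i j + v j i := by
  have nonneg := sum_erase_part_nonneg_of_forall_SW_le hmax i
  have upper := sum_le_add_card_sub_one_mul (Finset.mem_erase.mpr ⟨hij.symm, hj⟩)
    fun k hk => hc i k (Finset.ne_of_mem_erase hk).symm
  rw [Finset.cast_card_erase_of_mem (π.mem_part i)] at upper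
  linarith

theorem exists_enemy_free_partition_general (v : α → α → ℝ) {c : ℝ}
    (hc : ∀ i j, i ≠ j → v i j + v j i ≤ c) :
    ∃ π' : AgentPartition α, (∀ π, SW v π ≤ SW v π') ∧
      ∀ i j, i ≠ j → j ∈ π'.part i → (2 - (π'.part i).card) * c ≤ v i j + v j i := by
  obtain ⟨π', hmax⟩ := Finite.exists_max (SW v)
  exact ⟨π', hmax, fun _ _ hij hj => two_sub_card_part_mul_le_of_forall_SW_le hc hmax hij hj⟩

theorem exists_enemy_free_partition (v : α → α → ℝ)
    (hv : ∀ i, v i i = 0) (hsym : ∀ i j, v i j = v j i)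
    (hav : ∀ i j : α, i ≠ j →
      v i j = -(Fintype.card α : ℝ) ∨ v i j = 1)
    (π : AgentPartition α) :
    ∃ π' : AgentPartition α, SW v π ≤ SW v π' ∧
      ∀ i j : α, i ≠ j → j ∈ π'.part i →
        v i j ≠ -(Fintype.card α : ℝ) := by
  have le_one : ∀ i j, i ≠ j → v i j ≤ 1 := by
    intro i j hij
    rcases hav i j hij with h | h <;> linarith
  obtain ⟨π', hmax, hpair⟩ := exists_enemy_free_partition_general v (c := 2)
    fun i j hij => by linarith [le_one i j hij, le_one j i hij.symm]
  refine ⟨π', hmax π, fun i j hij hj henemy => ?_⟩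
  have hcard : ((π'.part i).card : ℝ) ≤ Fintype.card α := mod_cast Finset.card_le_univ _
  linarith [hpair i j hij hj, hsym i j]
end

section
/- Let (N, v) be a symmetric aversion-to-enemies game on n = |N| agents, and let G' be the simple graph on vertex set N whose edges are the pairs {i,j} with v(i,j) = 1. If every clique of G' has at most t vertices (t ≥ 1), then every partition π of N satisfies SW(π) ≤ n·(t − 1); in particular the maximum social welfare is at most n·(t − 1). -/
variable {α : Type*} [DecidableEq α] [Fintype α]

/-!
Turán's theorem bounds the number `e` of edges among `k` vertices without an `(r + 1)`-clique by
`2 * r * e ≤ (r - 1) * k ^ 2`. When each non-edge contributes at most `1 - r`, this is exactly what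
makes the total utility of a coalition of `k` agents at most `k * (r - 1)`, and it remains to sum
over the coalitions. The least admissible `r` is the clique number of the graph, which is at most
the number of agents `n`, so a penalty of `n` for each enemy is more than enough.
-/

open Finset SimpleGraph

section Turan

variable {V : Type*} {G : SimpleGraph V} {r : ℕ}

lemma two_mul_mul_card_edgeFinset_le_of_cliqueFree [Fintype V] [DecidableRel G.Adj]
    (hG : G.CliqueFree (r + 1)) :
    2 * r * (#G.edgeFinset : ℝ) ≤ (r - 1) * (Fintype.card V : ℝ) ^ 2 := by
  obtain rfl | hr := r.eq_zero_or_pos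
  · have : IsEmpty V := cliqueFree_one.mp hG
    simp
  · have turan : #G.edgeFinset ≤ #(turanGraph (Fintype.card V) r).edgeFinset :=
      hG.card_edgeFinset_le.trans_eq card_edgeFinset_turanGraph.symm
    have hnat : 2 * r * #G.edgeFinset ≤ (r - 1) * Fintype.card V ^ 2 :=
      (Nat.mul_le_mul_left _ turan).trans mul_card_edgeFinset_turanGraph_le
    have hreal : ((2 * r * #G.edgeFinset : ℕ) : ℝ) ≤ ((r - 1) * Fintype.card V ^ 2 : ℕ) :=
      Nat.cast_le.mpr hnat
    simpa only [Nat.cast_mul, Nat.cast_ofNat, Nat.cast_pow, Nat.cast_pred hr] using hreal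

lemma sum_sum_le_of_cliqueFree [Fintype V] (hG : G.CliqueFree (r + 1)) {w : V → V → ℝ}
    (hdiag : ∀ i, w i i ≤ 0) (hadj : ∀ i j, G.Adj i j → w i j ≤ 1)
    (hnonadj : ∀ i j, i ≠ j → ¬G.Adj i j → w i j ≤ 1 - r) :
    ∑ i, ∑ j, w i j ≤ Fintype.card V * ((r : ℝ) - 1) := by
  classical
  -- The right-hand side equals `1` on edges, `0` on the diagonal and `1 - r` on non-edges.
  have hw (i j : V) : w i j ≤
      r * (if G.Adj i j then 1 else 0) + (r - 1) * (if i = j then 1 else 0) - (r - 1) := by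
    by_cases hij : i = j
    · subst hij
      simpa using hdiag i
    by_cases hG' : G.Adj i j
    · simpa [hij, hG'] using hadj i j hG'
    · simpa [hij, hG'] using hnonadj i j hij hG'
  have sum_adj : ∑ i, ∑ j, (if G.Adj i j then (1 : ℝ) else 0) = 2 * #G.edgeFinset := by
    simp only [sum_boole, ← neighborFinset_eq_filter, card_neighborFinset_eq_degree]
    exact_mod_cast G.sum_degrees_eq_twice_card_edges
  calc ∑ i, ∑ j, w i j
      ≤ ∑ i, ∑ j, (r * (if G.Adj i j then 1 else 0) + (r - 1) * (if i = j then 1 else 0)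
          - ((r : ℝ) - 1)) := sum_le_sum fun i _ ↦ sum_le_sum fun j _ ↦ hw i j
    _ = 2 * r * #G.edgeFinset + (r - 1) * Fintype.card V - (r - 1) * (Fintype.card V : ℝ) ^ 2 := by
      simp only [sum_sub_distrib, sum_add_distrib, ← mul_sum, sum_adj, sum_ite_eq, mem_univ,
        if_true, sum_const, card_univ, nsmul_eq_mul]
      ring
    _ ≤ Fintype.card V * ((r : ℝ) - 1) := by
      linarith [two_mul_mul_card_edgeFinset_le_of_cliqueFree hG]

lemma sum_sum_le_of_cliqueFreeOn {s : Finset V} (hG : G.CliqueFreeOn s (r + 1)) {w : V → V → ℝ}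
    (hdiag : ∀ i ∈ s, w i i ≤ 0) (hadj : ∀ i ∈ s, ∀ j ∈ s, G.Adj i j → w i j ≤ 1)
    (hnonadj : ∀ i ∈ s, ∀ j ∈ s, i ≠ j → ¬G.Adj i j → w i j ≤ 1 - r) :
    ∑ i ∈ s, ∑ j ∈ s, w i j ≤ #s * ((r : ℝ) - 1) := by
  have h := sum_sum_le_of_cliqueFree (V := s) (w := fun i j ↦ w i j)
    ((cliqueFree_induce_iff G (s : Set V) _).mpr hG) (fun i ↦ hdiag i i.2)
    (fun i j ↦ hadj i i.2 j j.2)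
    (fun i j hij ↦ hnonadj i i.2 j j.2 (Subtype.coe_ne_coe.mpr hij))
  simpa only [← sum_coe_sort s, Fintype.card_coe] using h

lemma cliqueFree_cliqueNum_add_one [Finite V] : G.CliqueFree (G.cliqueNum + 1) := by
  intro s hs
  have hle : #s ≤ G.cliqueNum := hs.isClique.card_le_cliqueNum
  have hcard : #s = G.cliqueNum + 1 := hs.card_eq
  lia

lemma cliqueNum_le_of_forall_isClique (h : ∀ s : Finset V, G.IsClique (s : Set V) → #s ≤ r) :
    G.cliqueNum ≤ r := by
  obtain ⟨s, hs⟩ := G.exists_isNClique_cliqueNum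
  exact hs.card_eq ▸ h s hs.isClique

end Turan

namespace AgentPartition

lemma filter_part_eq_part (π : AgentPartition α) (i : α) :
    ({j | π.part j = π.part i} : Finset α) = π.part i := by
  ext j
  simpa only [mem_filter_univ] using ⟨fun h ↦ h ▸ π.mem_part j, π.part_eq_of_mem i j⟩

lemma sum_coalitions (π : AgentPartition α) {M : Type*} [AddCommMonoid M]
    (f : Finset α → α → M) :
    ∑ C ∈ univ.image π.part, ∑ i ∈ C, f C i = ∑ i, f (π.part i) i := by
  refine sum_image' _ fun i _ ↦ ?_
  rw [filter_part_eq_part]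
  exact sum_congr rfl fun j hj ↦ by rw [π.part_eq_of_mem i j hj]

lemma SW_le_card_mul (π : AgentPartition α) {v : α → α → ℝ} {c : ℝ}
    (h : ∀ i, ∑ j ∈ π.part i, ∑ k ∈ π.part i, v j k ≤ #(π.part i) * c) :
    SW v π ≤ Fintype.card α * c := by
  calc SW v π
      = ∑ C ∈ univ.image π.part, ∑ j ∈ C, ∑ k ∈ C, v j k :=
        (π.sum_coalitions fun C j ↦ ∑ k ∈ C, v j k).symm
    _ ≤ ∑ C ∈ univ.image π.part, ∑ _j ∈ C, c := by
      refine sum_le_sum (forall_mem_image.mpr fun i _ ↦ ?_)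
      simpa only [sum_const, nsmul_eq_mul] using h i
    _ = Fintype.card α * c := by
      rw [π.sum_coalitions fun _ _ ↦ c, sum_const, card_univ, nsmul_eq_mul]

end AgentPartition

theorem sw_le_of_clique_bound_general {v : α → α → ℝ} {G : SimpleGraph α}
    (hdiag : ∀ i, v i i ≤ 0) (hadj : ∀ i j, G.Adj i j → v i j ≤ 1)
    (hnonadj : ∀ i j, i ≠ j → ¬G.Adj i j → v i j ≤ 1 - G.cliqueNum) (π : AgentPartition α) :
    SW v π ≤ Fintype.card α * ((G.cliqueNum : ℝ) - 1) :=
  π.SW_le_card_mul fun _ ↦ sum_sum_le_of_cliqueFreeOn cliqueFree_cliqueNum_add_one.cliqueFreeOn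
    (fun i _ ↦ hdiag i) (fun i _ j _ ↦ hadj i j) (fun i _ j _ ↦ hnonadj i j)

theorem sw_le_of_clique_bound (v : α → α → ℝ)
    (hv : ∀ i, v i i = 0) (hsym : ∀ i j, v i j = v j i)
    (hav : ∀ i j : α, i ≠ j →
      v i j = -(Fintype.card α : ℝ) ∨ v i j = 1)
    (G' : SimpleGraph α)
    (hG : ∀ i j, G'.Adj i j ↔ i ≠ j ∧ v i j = 1)
    (t : ℕ) (ht : 1 ≤ t)
    (hclique : ∀ s : Finset α, G'.IsClique (↑s : Set α) → s.card ≤ t)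
    (π : AgentPartition α) :
    SW v π ≤ (Fintype.card α : ℝ) * ((t : ℝ) - 1) := by
  have hnonadj (i j : α) (hij : i ≠ j) (hG' : ¬G'.Adj i j) : v i j ≤ 1 - G'.cliqueNum := by
    have henemy : v i j = -(Fintype.card α : ℝ) :=
      (hav i j hij).resolve_right fun h ↦ hG' ((hG i j).mpr ⟨hij, h⟩)
    have hcard : (G'.cliqueNum : ℝ) ≤ Fintype.card α :=
      Nat.cast_le.mpr (cliqueNum_le_of_forall_isClique fun s _ ↦ s.card_le_univ)
    linarith
  calc SW v π ≤ Fintype.card α * ((G'.cliqueNum : ℝ) - 1) :=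
        sw_le_of_clique_bound_general (fun i ↦ (hv i).le) (fun i j h ↦ ((hG i j).mp h).2.le)
          hnonadj π
    _ ≤ Fintype.card α * ((t : ℝ) - 1) := by
      gcongr
      exact cliqueNum_le_of_forall_isClique hclique
end

section
/- Let G = (V, E) be a finite simple graph and let v⁻ ≥ 1 be a real number. Define a symmetric additively separable hedonic game on the agent set N = V ∪ {z}, where z ∉ V, with symmetric valuations v(z, a) = 1 for every a ∈ V, and for distinct a, b ∈ V: v(a,b) = 0 if {a,b} ∈ E and v(a,b) = −v⁻ otherwise. Then the maximum social welfare over all partitions of N equals 2·ω(G), where ω(G) is the maximum number of vertices in a clique of G (with ω(G) = 0 if V = ∅); the maximum is attained by the partition whose only nonsingleton coalition is {z} ∪ C* for a maximum clique C* of G. -/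
variable {α : Type*} [DecidableEq α] [Fintype α]

/-!
Social welfare is the sum over the coalitions `C` of the values `∑ i ∈ C, ∑ j ∈ C, v i j`, and a
coalition avoiding the hub `z` has nonpositive value. The coalition `{z} ∪ S` is worth `2 * |S|`
minus at least `2` for every nonadjacent pair in `S`. Adding the vertices of `S` one at a time
and keeping those adjacent to all vertices already kept yields a clique `T ⊆ S`. Each discarded
vertex gains `2` from the hub and loses at least `2` to a nonadjacent vertex, so `{z} ∪ S` is worth
at most `2 * |T|`.
-/

section CoalitionWelfare

variable {ι : Type*}

/-- The total utility `∑ i ∈ C, u_i(C)` of the members of a single coalition `C`; the social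
welfare of a partition is the sum of these over its coalitions. -/
def coalitionWelfare (v : ι → ι → ℝ) (C : Finset ι) : ℝ :=
  ∑ i ∈ C, ∑ j ∈ C, v i j

theorem two_mul_coalitionWelfare (v : ι → ι → ℝ) (C : Finset ι) :
    2 * coalitionWelfare v C = ∑ i ∈ C, ∑ j ∈ C, (v i j + v j i) := by
  simp only [Finset.sum_add_distrib]
  rw [Finset.sum_comm (f := fun i j => v j i), ← two_mul, coalitionWelfare]

theorem coalitionWelfare_nonpos {v : ι → ι → ℝ} {C : Finset ι}
    (hv : ∀ i ∈ C, ∀ j ∈ C, v i j + v j i ≤ 0) : coalitionWelfare v C ≤ 0 := by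
  have hsum : ∑ i ∈ C, ∑ j ∈ C, (v i j + v j i) ≤ 0 :=
    Finset.sum_nonpos fun i hi => Finset.sum_nonpos (hv i hi)
  linarith [two_mul_coalitionWelfare v C]

theorem coalitionWelfare_eq_zero {v : ι → ι → ℝ} {C : Finset ι}
    (hv : ∀ i ∈ C, ∀ j ∈ C, v i j + v j i = 0) : coalitionWelfare v C = 0 := by
  have hdouble := two_mul_coalitionWelfare v C
  rw [Finset.sum_eq_zero fun i hi => Finset.sum_eq_zero (hv i hi)] at hdouble
  linarith

theorem coalitionWelfare_insert [DecidableEq ι] (v : ι → ι → ℝ) {i : ι} {C : Finset ι}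
    (hi : i ∉ C) :
    coalitionWelfare v (insert i C) =
      v i i + ∑ j ∈ C, (v i j + v j i) + coalitionWelfare v C := by
  simp only [coalitionWelfare, Finset.sum_insert hi, Finset.sum_add_distrib]
  ring

theorem coalitionWelfare_insertNone (v : Option ι → Option ι → ℝ) (S : Finset ι) :
    coalitionWelfare v S.insertNone =
      v none none + ∑ a ∈ S, (v none (some a) + v (some a) none) +
        coalitionWelfare (fun a b => v (some a) (some b)) S := by
  simp only [coalitionWelfare, Finset.sum_insertNone, Finset.sum_add_distrib]
  ring

end CoalitionWelfare

theorem exists_isClique_two_mul_card_add_coalitionWelfare_le {V : Type*} {G : SimpleGraph V}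
    {w : V → V → ℝ} (hw : ∀ a b, w a b + w b a ≤ 0)
    (hnadj : ∀ a b, a ≠ b → ¬ G.Adj a b → w a b + w b a ≤ -2) (S : Finset V) :
    ∃ T ⊆ S, G.IsClique (T : Set V) ∧
      2 * (S.card : ℝ) + coalitionWelfare w S ≤ 2 * (T.card : ℝ) := by
  classical
  induction S using Finset.induction_on with
  | empty => exact ⟨∅, subset_rfl, by simp, by simp [coalitionWelfare]⟩
  | insert a S ha ih =>
    obtain ⟨T, hTS, hT, hle⟩ := ih
    have hself : w a a ≤ 0 := by linarith [hw a a]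
    rw [Finset.card_insert_of_notMem ha, Nat.cast_succ, coalitionWelfare_insert w ha]
    by_cases hall : ∀ b ∈ T, G.Adj a b
    · have hpairs : ∑ b ∈ S, (w a b + w b a) ≤ 0 := Finset.sum_nonpos fun b _ => hw a b
      refine ⟨insert a T, Finset.insert_subset_insert a hTS, ?_, ?_⟩
      · rw [Finset.coe_insert]
        exact hT.insert fun b hb _ => hall b hb
      · rw [Finset.card_insert_of_notMem (Finset.notMem_mono hTS ha), Nat.cast_succ]
        linarith
    · push Not at hall
      obtain ⟨b, hbT, hab⟩ := hall
      have hbS : b ∈ S := hTS hbT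
      have hpairs : ∑ c ∈ S, (w a c + w c a) ≤ -2 := by
        rw [← Finset.add_sum_erase S _ hbS]
        exact (add_le_of_nonpos_right (Finset.sum_nonpos fun c _ => hw a c)).trans
          (hnadj a b (ne_of_mem_of_not_mem hbS ha).symm hab)
      exact ⟨T, hTS.trans (Finset.subset_insert a S), hT, by linarith⟩

attribute [ext] AgentPartition

namespace AgentPartition

/-- The partition whose only possibly nonsingleton coalition is `C`. -/
def ofCoalition (C : Finset α) : AgentPartition α where
  part i := if i ∈ C then C else {i}
  mem_part i := by split_ifs with hi <;> simp [hi]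
  part_eq_of_mem i j hj := by
    split_ifs at hj with hi
    · simp only [hi, hj, if_true]
    · rw [Finset.mem_singleton.mp hj]

theorem part_eq_part_iff_mem (π : AgentPartition α) {i j : α} :
    π.part j = π.part i ↔ j ∈ π.part i :=
  ⟨fun h => h ▸ π.mem_part j, π.part_eq_of_mem i j⟩

end AgentPartition

theorem SW_ofCoalition {v : α → α → ℝ} (hv : ∀ i, v i i = 0) (C : Finset α) :
    SW v (AgentPartition.ofCoalition C) = coalitionWelfare v C := by
  have hutility : ∀ i, ∑ j ∈ (AgentPartition.ofCoalition C).part i, v i j =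
      if i ∈ C then ∑ j ∈ C, v i j else 0 := fun i => by
    by_cases hi : i ∈ C <;> simp [AgentPartition.ofCoalition, hi, hv]
  simp only [SW, coalitionWelfare, hutility, Finset.sum_ite_mem, Finset.univ_inter]

theorem SW_eq_sum_coalitionWelfare (v : α → α → ℝ) (π : AgentPartition α) :
    SW v π = ∑ C ∈ Finset.univ.image π.part, coalitionWelfare v C := by
  refine (Finset.sum_image' _ fun i _ => ?_).symm
  have hfiber : Finset.univ.filter (fun j => π.part j = π.part i) = π.part i := by
    ext j
    simp [π.part_eq_part_iff_mem]
  rw [hfiber]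
  exact Finset.sum_congr rfl fun j hj => by rw [π.part_eq_of_mem i j hj]

theorem SW_le_coalitionWelfare_part {v : α → α → ℝ} {i : α}
    (hv : ∀ C : Finset α, i ∉ C → coalitionWelfare v C ≤ 0) (π : AgentPartition α) :
    SW v π ≤ coalitionWelfare v (π.part i) := by
  rw [SW_eq_sum_coalitionWelfare,
    ← Finset.add_sum_erase _ _ (Finset.mem_image_of_mem π.part (Finset.mem_univ i))]
  refine add_le_of_nonpos_right (Finset.sum_nonpos fun C hC => hv C fun hiC => ?_)
  obtain ⟨hne, hC⟩ := Finset.mem_erase.mp hC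
  obtain ⟨j, -, rfl⟩ := Finset.mem_image.mp hC
  exact hne (π.part_eq_of_mem j i hiC).symm

/-- The hedonic game of `G` on the agents `V ∪ {z}`, with the hub `z` encoded as `none`. Social
welfare only depends on the sums `v i j + v j i`, so the game is specified up to symmetrization,
and nonadjacent pairs may have different penalties. -/
structure IsCliqueGame {V : Type*} (G : SimpleGraph V) (v : Option V → Option V → ℝ) : Prop where
  self : ∀ i, v i i = 0
  hub : ∀ a, v none (some a) + v (some a) none = 2
  adj : ∀ a b, G.Adj a b → v (some a) (some b) + v (some b) (some a) = 0
  not_adj : ∀ a b, a ≠ b → ¬ G.Adj a b → v (some a) (some b) + v (some b) (some a) ≤ -2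

namespace IsCliqueGame

variable {V : Type*} {G : SimpleGraph V} {v : Option V → Option V → ℝ}

theorem some_add_some_nonpos (hv : IsCliqueGame G v) (a b : V) :
    v (some a) (some b) + v (some b) (some a) ≤ 0 := by
  rcases eq_or_ne a b with rfl | hab
  · simp [hv.self]
  · by_cases h : G.Adj a b
    · exact (hv.adj a b h).le
    · linarith [hv.not_adj a b hab h]

theorem coalitionWelfare_nonpos_of_none_notMem (hv : IsCliqueGame G v) {C : Finset (Option V)}
    (hC : none ∉ C) : coalitionWelfare v C ≤ 0 := by
  refine coalitionWelfare_nonpos fun i hi j hj => ?_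
  obtain ⟨a, rfl⟩ := Option.ne_none_iff_exists'.mp (ne_of_mem_of_not_mem hi hC)
  obtain ⟨b, rfl⟩ := Option.ne_none_iff_exists'.mp (ne_of_mem_of_not_mem hj hC)
  exact hv.some_add_some_nonpos a b

protected theorem coalitionWelfare_insertNone (hv : IsCliqueGame G v) (S : Finset V) :
    coalitionWelfare v S.insertNone =
      2 * (S.card : ℝ) + coalitionWelfare (fun a b => v (some a) (some b)) S := by
  rw [coalitionWelfare_insertNone, hv.self, Finset.sum_congr rfl fun a _ => hv.hub a]
  simp [mul_comm]

theorem coalitionWelfare_insertNone_of_isClique (hv : IsCliqueGame G v) {C : Finset V}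
    (hC : G.IsClique (C : Set V)) :
    coalitionWelfare v C.insertNone = 2 * (C.card : ℝ) := by
  rw [hv.coalitionWelfare_insertNone, coalitionWelfare_eq_zero fun a ha b hb => ?_, add_zero]
  rcases eq_or_ne a b with rfl | hab
  · simp [hv.self]
  · exact hv.adj a b (hC ha hb hab)

theorem exists_isClique_SW_le [Fintype V] [DecidableEq V] (hv : IsCliqueGame G v)
    (π : AgentPartition (Option V)) :
    ∃ T : Finset V, G.IsClique (T : Set V) ∧ SW v π ≤ 2 * (T.card : ℝ) := by
  obtain ⟨T, -, hT, hle⟩ := exists_isClique_two_mul_card_add_coalitionWelfare_le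
    hv.some_add_some_nonpos hv.not_adj (π.part none).eraseNone
  refine ⟨T, hT, ?_⟩
  calc SW v π
      ≤ coalitionWelfare v (π.part none) :=
        SW_le_coalitionWelfare_part (fun _ => hv.coalitionWelfare_nonpos_of_none_notMem) π
    _ = coalitionWelfare v (π.part none).eraseNone.insertNone := by
        rw [Finset.insertNone_eraseNone, Finset.insert_eq_of_mem (π.mem_part none)]
    _ ≤ 2 * (T.card : ℝ) := (hv.coalitionWelfare_insertNone _).trans_le hle

end IsCliqueGame

theorem max_sw_eq_two_mul_max_clique_general {V : Type*} [Fintype V] [DecidableEq V]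
    {G : SimpleGraph V} {v : Option V → Option V → ℝ} (hv : IsCliqueGame G v)
    {C : Finset V} (hC : G.IsMaximumClique C) :
    IsGreatest (Set.range (SW v)) (2 * (C.card : ℝ)) ∧
      SW v (AgentPartition.ofCoalition C.insertNone) = 2 * (C.card : ℝ) := by
  have hattained : SW v (AgentPartition.ofCoalition C.insertNone) = 2 * (C.card : ℝ) :=
    (SW_ofCoalition hv.self _).trans (hv.coalitionWelfare_insertNone_of_isClique hC.isClique)
  refine ⟨⟨⟨_, hattained⟩, ?_⟩, hattained⟩
  rintro _ ⟨π, rfl⟩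
  obtain ⟨T, hT, hle⟩ := hv.exists_isClique_SW_le π
  have hcard : (T.card : ℝ) ≤ C.card := by exact_mod_cast hC.maximum T hT
  linarith

theorem max_sw_eq_two_mul_max_clique
    (V : Type*) [Fintype V] [DecidableEq V] (G : SimpleGraph V)
    (vminus : ℝ) (hvm : 1 ≤ vminus)
    (v : Option V → Option V → ℝ)
    (hv0 : ∀ i, v i i = 0)
    (hsym : ∀ i j, v i j = v j i)
    (hz : ∀ a : V, v none (some a) = 1)
    (hadj : ∀ a b : V, a ≠ b → G.Adj a b → v (some a) (some b) = 0)
    (hnadj : ∀ a b : V, a ≠ b → ¬ G.Adj a b → v (some a) (some b) = -vminus)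
    (Cstar : Finset V) (hC : G.IsClique (↑Cstar : Set V))
    (hCmax : ∀ s : Finset V, G.IsClique (↑s : Set V) → s.card ≤ Cstar.card)
    (πstar : AgentPartition (Option V))
    (hπ : ∀ i : Option V,
      πstar.part i =
        if i ∈ insert none (Cstar.image some) then insert none (Cstar.image some)
        else {i}) :
    IsGreatest {x : ℝ | ∃ π : AgentPartition (Option V), SW v π = x}
      (2 * (Cstar.card : ℝ)) ∧
      SW v πstar = 2 * (Cstar.card : ℝ) := by
  have hv : IsCliqueGame G v :=
    { self := hv0
      hub := fun a => by rw [hsym (some a), hz]; norm_num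
      adj := fun a b h => by rw [hsym (some b), hadj a b h.ne h, add_zero]
      not_adj := fun a b hab h => by rw [hsym (some b), hnadj a b hab h]; linarith }
  have hπstar : πstar = AgentPartition.ofCoalition Cstar.insertNone := by
    rw [← Finset.eraseNone_image_some Cstar, Finset.insertNone_eraseNone]
    exact AgentPartition.ext (funext hπ)
  exact hπstar ▸ max_sw_eq_two_mul_max_clique_general hv ⟨hC, hCmax⟩
end
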